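/- arXiv:2106.09808 — 2 statements merged into one kernel-verified Lean document; each statement's English description precedes it below -/
import Mathlib

section
/- Let A and U be nonempty sets with the discrete topology, let X ⊆ A^ℤ be a right-finite shift space, and let Ψ : X → U^ℤ be an extended sliding block code of finite degree. Assume that for every sequence (x^k)_{k≥1} in X with Ψ(x^k) → y in U^ℤ there exist a sequence of A-valued functions (h_ℓ)_{ℓ≥0} on finite subsets of ℤ with h_{ℓ+1} extending h_ℓ, and a decreasing sequence (S_ℓ)_{ℓ≥0} of infinite subsets of ℕ, such that for every ℓ ≥ 0 one has x^k ∈ C_X(h_ℓ) for all k ∈ S_ℓ and Ψ(z)_j = y_j for every z ∈ C_X(h_ℓ) and |j| ≤ ℓ, and moreover the set D = ⋃_{ℓ≥0} dom(h_ℓ) is unbounded below in ℤ or bounded above in ℤ (i.e., D is not of the remaining type: bounded below and unbounded above). Then Ψ(X) is a closed subset of U^ℤ, hence a shift space over U. -/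
open Filter Topology Set

namespace ShiftPaper

/-- The shift map `σ` on the full shift `A^ℤ`: `σ(x)_n = x_{n+1}`. -/
def shiftMap {A : Type*} (x : ℤ → A) : ℤ → A := fun n => x (n + 1)

/-- The `n`-th iterate of the shift: `σ^n(x)_m = x_{m+n}` (for `n : ℤ`). -/
def shiftIter {A : Type*} (n : ℤ) (x : ℤ → A) : ℤ → A := fun m => x (m + n)

/-- A shift space: a nonempty closed shift-invariant subset of the full shift. -/
def IsShiftSpace {A : Type*} [TopologicalSpace A] (X : Set (ℤ → A)) : Prop :=
  X.Nonempty ∧ IsClosed X ∧ shiftMap '' X = X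

/-- The cylinder in `X` determined by the finite set `s ⊆ ℤ` and the values of `h` on `s`:
`C_X(h) = X ∩ {x : x_i = h_i for all i ∈ s}`. -/
def cylX {A : Type*} (X : Set (ℤ → A)) (s : Finset ℤ) (h : ℤ → A) : Set (ℤ → A) :=
  X ∩ {x | ∀ i ∈ s, x i = h i}

/-- A barrier on `X`: a partition of `X` all of whose members are nonempty cylinders in `X`. -/
def IsBarrier {A : Type*} (X : Set (ℤ → A)) (B : Set (Set (ℤ → A))) : Prop :=
  (∀ C ∈ B, C.Nonempty ∧ ∃ (s : Finset ℤ) (h : ℤ → A), C = cylX X s h) ∧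
  (∀ x ∈ X, ∃! C, C ∈ B ∧ x ∈ C)

/-- `Ψ` is induced by the local rule `φ` on the barrier `B`:
`Ψ(x)_n = φ(C)` whenever `C ∈ B` contains `σ^n(x)`. -/
def InducedBy {A U : Type*} (X : Set (ℤ → A)) (Ψ : (ℤ → A) → ℤ → U)
    (B : Set (Set (ℤ → A))) (φ : Set (ℤ → A) → U) : Prop :=
  ∀ x ∈ X, ∀ n : ℤ, ∀ C ∈ B, shiftIter n x ∈ C → Ψ x n = φ C

/-- `Ψ` is an extended sliding block code on `X`. -/
def IsESBC {A U : Type*} (X : Set (ℤ → A)) (Ψ : (ℤ → A) → ℤ → U) : Prop :=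
  ∃ (B : Set (Set (ℤ → A))) (φ : Set (ℤ → A) → U), IsBarrier X B ∧ InducedBy X Ψ B φ

/-- `Ψ` is an extended sliding block code of finite degree: it is induced by a local rule `φ`
on a barrier `B` (so `B` is attached to `Ψ`) such that for each symbol `u` only finitely many
members of `B` have `φ`-value (i.e. `Ψ₀`-value) `u`. -/
def IsFiniteDegreeESBC {A U : Type*} (X : Set (ℤ → A)) (Ψ : (ℤ → A) → ℤ → U) : Prop :=
  ∃ (B : Set (Set (ℤ → A))) (φ : Set (ℤ → A) → U), IsBarrier X B ∧ InducedBy X Ψ B φ ∧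
    ∀ u : U, {C | C ∈ B ∧ φ C = u}.Finite

/-- The data produced by the crucial lemma for a distinguished sequence `x` with
`Ψ(x^k) → y`: a sequence of partial functions `h_ℓ` (with finite domains `s_ℓ`, each
extending the previous one) and a decreasing sequence `S_ℓ` of infinite subsets of `ℕ`,
such that `x^k ∈ C_X(h_ℓ)` for `k ∈ S_ℓ` and `Ψ(z)|_{[-ℓ,ℓ]} = y|_{[-ℓ,ℓ]}` on `C_X(h_ℓ)`. -/
def AssocData {A U : Type*} (X : Set (ℤ → A)) (Ψ : (ℤ → A) → ℤ → U)
    (x : ℕ → ℤ → A) (y : ℤ → U)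
    (s : ℕ → Finset ℤ) (h : ℕ → ℤ → A) (S : ℕ → Set ℕ) : Prop :=
  (∀ ℓ : ℕ, s ℓ ⊆ s (ℓ + 1)) ∧
  (∀ ℓ : ℕ, ∀ i ∈ s ℓ, h (ℓ + 1) i = h ℓ i) ∧
  (∀ ℓ : ℕ, (S ℓ).Infinite) ∧
  (∀ ℓ : ℕ, S (ℓ + 1) ⊆ S ℓ) ∧
  (∀ ℓ : ℕ, ∀ k ∈ S ℓ, x k ∈ cylX X (s ℓ) (h ℓ)) ∧
  (∀ ℓ : ℕ, ∀ z ∈ cylX X (s ℓ) (h ℓ), ∀ j : ℤ, |j| ≤ (ℓ : ℤ) → Ψ z j = y j)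

/-- The symbol `a` belongs to `L₁(X)`: it appears in some point of `X`. -/
def inLetter {A : Type*} (X : Set (ℤ → A)) (a : A) : Prop :=
  ∃ x ∈ X, ∃ i : ℤ, x i = a

/-- The two-letter word `ab` belongs to the language `L(X)`. -/
def inLang2 {A : Type*} (X : Set (ℤ → A)) (a b : A) : Prop :=
  ∃ x ∈ X, ∃ i : ℤ, x i = a ∧ x (i + 1) = b

/-- `X` is right-finite: for each allowed symbol `a`, only finitely many `b` with `ab ∈ L(X)`. -/
def RightFinite {A : Type*} (X : Set (ℤ → A)) : Prop :=
  ∀ a : A, inLetter X a → {b : A | inLang2 X a b}.Finite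

/-- `X` is left-finite: for each allowed symbol `a`, only finitely many `b` with `ba ∈ L(X)`. -/
def LeftFinite {A : Type*} (X : Set (ℤ → A)) : Prop :=
  ∀ a : A, inLetter X a → {b : A | inLang2 X b a}.Finite

end ShiftPaper

open ShiftPaper

theorem ShiftPaper.aux_shiftIter_mem {A : Type*} (X : Set (ℤ → A)) (hX : shiftMap '' X = X)
    (n : ℤ) : ∀ x ∈ X, shiftIter n x ∈ X := by
  induction n using Int.induction_on with
  | zero =>
    intro x hx
    have : shiftIter 0 x = x := by funext m; simp [shiftIter]
    rwa [this]
  | succ n ih =>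
    intro x hx
    have h1 : shiftMap (shiftIter (n : ℤ) x) ∈ X := hX ▸ mem_image_of_mem _ (ih x hx)
    have : shiftIter ((n : ℤ) + 1) x = shiftMap (shiftIter (n : ℤ) x) := by
      funext m; simp only [shiftIter, shiftMap]; congr 1; ring
    rwa [this]
  | pred n ih =>
    intro x hx
    rw [← hX] at hx
    obtain ⟨x', hx', rfl⟩ := hx
    have : shiftIter (-(n : ℤ) - 1) (shiftMap x') = shiftIter (-(n : ℤ)) x' := by
      funext m; simp only [shiftIter, shiftMap]; congr 1; ring
    rw [this]
    exact ih x' hx'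

theorem ShiftPaper.aux_comm {A U : Type*} (X : Set (ℤ → A)) (hX : shiftMap '' X = X)
    (Ψ : (ℤ → A) → ℤ → U) (hΨ : IsFiniteDegreeESBC X Ψ) (x : ℤ → A) (hx : x ∈ X) :
    Ψ (shiftMap x) = shiftMap (Ψ x) := by
  obtain ⟨B, φ, hB, hI, -⟩ := hΨ
  funext n
  have hm := aux_shiftIter_mem X hX (n + 1) x hx
  obtain ⟨C, ⟨hC, hxC⟩, -⟩ := hB.2 _ hm
  have e : shiftIter n (shiftMap x) = shiftIter (n + 1) x := by
    funext m; simp only [shiftIter, shiftMap]; congr 1; ring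
  have h1 : shiftMap x ∈ X := hX ▸ mem_image_of_mem _ hx
  change Ψ (shiftMap x) n = Ψ x (n + 1)
  rw [hI x hx (n + 1) C hC hxC, hI (shiftMap x) h1 n C hC (e ▸ hxC)]

theorem ShiftPaper.aux_fin {A : Type*} (X : Set (ℤ → A)) (hR : RightFinite X)
    (w : ℕ → ℤ → A) (hw : ∀ l, w l ∈ X) (d : ℤ) (hd : (range (fun l => w l d)).Finite) (n : ℕ) :
    (range (fun l => w l (d + n))).Finite := by
  induction n with
  | zero => simpa using hd
  | succ n ih =>
    refine (ih.biUnion (t := fun a => {b | inLang2 X a b}) ?_).subset ?_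
    · rintro _ ⟨l, rfl⟩
      exact hR _ ⟨w l, hw l, _, rfl⟩
    · rintro _ ⟨l, rfl⟩
      refine mem_biUnion (mem_range_self l) ⟨w l, hw l, _, rfl, ?_⟩
      push_cast
      rw [add_assoc]

theorem ShiftPaper.aux_closed {A U : Type*} [TopologicalSpace A] [DiscreteTopology A]
    (X : Set (ℤ → A)) (hc : IsClosed X) (hR : RightFinite X)
    (Ψ : (ℤ → A) → ℤ → U) (x : ℕ → ℤ → A) (y : ℤ → U)
    (s : ℕ → Finset ℤ) (h : ℕ → ℤ → A) (S : ℕ → Set ℕ) (hA : AssocData X Ψ x y s h S)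
    (hD : ¬ BddBelow (⋃ ℓ, (s ℓ : Set ℤ)) ∨ BddAbove (⋃ ℓ, (s ℓ : Set ℤ))) :
    ∃ z ∈ X, Ψ z = y := by
  obtain ⟨hs, hh, hSi, hS, hx, hy⟩ := hA
  have hsm : Monotone s := monotone_nat_of_le_succ hs
  have hSm : Antitone S := antitone_nat_of_succ_le hS
  have hhm : ∀ l m, l ≤ m → ∀ i ∈ s l, h m i = h l i := by
    intro l m hlm
    induction m, hlm using Nat.le_induction with
    | base => intros; rfl
    | succ m hm ih => intro i hi; rw [hh m i (hsm hm hi), ih i hi]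
  -- it is enough to find a point in all the cylinders
  suffices H : ∃ z ∈ X, ∀ l, ∀ i ∈ s l, z i = h l i by
    obtain ⟨z, hz, H⟩ := H
    refine ⟨z, hz, funext fun j => ?_⟩
    refine hy j.natAbs z ⟨hz, H _⟩ j ?_
    simp
  choose k hk using fun l => (hSi l).nonempty
  have hw : ∀ l, x (k l) ∈ X := fun l => (hx l _ (hk l)).1
  have hwh : ∀ l m, l ≤ m → ∀ i ∈ s l, x (k m) i = h l i := fun l m hlm i hi =>
    (hx l _ (hSm hlm (hk m))).2 i hi
  by_cases hb : BddBelow (⋃ ℓ, (s ℓ : Set ℤ))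
  · have ha := hD.resolve_left (not_not.2 hb)
    have hfin : (⋃ ℓ, (s ℓ : Set ℤ)).Finite := Set.finite_iff_bddBelow_bddAbove.2 ⟨hb, ha⟩
    have : ∃ L, (⋃ ℓ, (s ℓ : Set ℤ)) ⊆ s L := by
      have hdir : Directed (· ⊆ ·) fun l => (s l : Set ℤ) :=
        Monotone.directed_le fun a b hab => Finset.coe_subset.2 (hsm hab)
      have := hdir.exists_mem_subset_of_finset_subset_biUnion (s := hfin.toFinset) (by simp)
      simpa using this
    obtain ⟨L, hL⟩ := this
    refine ⟨x (k L), hw L, fun l i hi => ?_⟩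
    have hiL : i ∈ s L := hL (mem_iUnion.2 ⟨l, hi⟩)
    rw [hwh L L le_rfl i hiL]
    rcases le_total l L with hl | hl
    · exact hhm l L hl i hi
    · exact (hhm L l hl i hiL).symm
  · have hF : ∀ m, (range (fun l => x (k l) m)).Finite := by
      intro m
      rw [not_bddBelow_iff] at hb
      obtain ⟨d, hd, hdm⟩ := hb m
      obtain ⟨l0, hl0⟩ := mem_iUnion.1 hd
      obtain ⟨n, hn⟩ := Int.eq_ofNat_of_zero_le (sub_nonneg.2 hdm.le)
      have e : m = d + n := by omega
      rw [e]
      refine aux_fin X hR (fun l => x (k l)) hw d ?_ n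
      refine (((finite_Iio l0).image (fun l => x (k l) d)).union
        (finite_singleton (h l0 d))).subset ?_
      rintro _ ⟨l, rfl⟩
      rcases lt_or_ge l l0 with hl | hl
      · exact Or.inl ⟨l, hl, rfl⟩
      · exact Or.inr (hwh l0 l hl d hl0)
    have hK : IsCompact (Set.univ.pi fun m => range (fun l => x (k l) m)) :=
      isCompact_univ_pi fun m => (hF m).isCompact
    obtain ⟨z, -, θ, hθ, hz⟩ := hK.tendsto_subseq (x := fun l => x (k l))
      (fun l m _ => ⟨l, rfl⟩)
    refine ⟨z, hc.mem_of_tendsto hz (Eventually.of_forall fun n => hw _), fun l i hi => ?_⟩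
    have h1 := (tendsto_pi_nhds.1 hz) i
    refine tendsto_nhds_unique h1 (tendsto_const_nhds.congr' ?_)
    filter_upwards [hθ.tendsto_atTop.eventually_ge_atTop l] with n hn
    exact (hwh l (θ n) hn i hi).symm

/-- STATEMENT 10 (Theorem 3.5 b) of the paper): a finite degree ESBC on a right-finite
shift space, such that every distinguished sequence admits associated data whose total
domain `D` is unbounded below or bounded above (classes C1–C4, i.e. not of class C5),
has closed image, hence its image is a shift space. -/
theorem closed_image_right_finite
    {A U : Type*} [TopologicalSpace A] [DiscreteTopology A] [Nonempty A]
    [TopologicalSpace U] [DiscreteTopology U] [Nonempty U]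
    (X : Set (ℤ → A)) (hX : IsShiftSpace X)
    (hR : RightFinite X)
    (Ψ : (ℤ → A) → ℤ → U) (hΨ : IsFiniteDegreeESBC X Ψ)
    (hyp : ∀ (x : ℕ → ℤ → A) (y : ℤ → U), (∀ k, x k ∈ X) →
      Tendsto (fun k => Ψ (x k)) atTop (𝓝 y) →
      ∃ (s : ℕ → Finset ℤ) (h : ℕ → ℤ → A) (S : ℕ → Set ℕ),
        AssocData X Ψ x y s h S ∧
        (¬ BddBelow (⋃ ℓ, (s ℓ : Set ℤ)) ∨ BddAbove (⋃ ℓ, (s ℓ : Set ℤ)))) :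
    IsClosed (Ψ '' X) ∧ IsShiftSpace (Ψ '' X) := by
  have hcl : IsClosed (Ψ '' X) := by
    refine isClosed_of_closure_subset fun y hy => ?_
    obtain ⟨u, hu, hlim⟩ := mem_closure_iff_seq_limit.1 hy
    choose x hx hxu using hu
    obtain ⟨s, h, S, hA, hD⟩ := hyp x y hx (by simpa only [hxu] using hlim)
    exact aux_closed X hX.2.1 hR Ψ x y s h S hA hD
  refine ⟨hcl, hX.1.image _, hcl, ?_⟩
  have hc := aux_comm X hX.2.2 Ψ hΨ
  ext y
  constructor
  · rintro ⟨_, ⟨x, hx, rfl⟩, rfl⟩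
    exact ⟨shiftMap x, hX.2.2 ▸ mem_image_of_mem _ hx, hc x hx⟩
  · rintro ⟨x, hx, rfl⟩
    rw [← hX.2.2] at hx
    obtain ⟨x', hx', rfl⟩ := hx
    exact ⟨Ψ x', mem_image_of_mem _ hx', (hc x' hx').symm⟩
end

section
/- Let A and U be nonempty sets with the discrete topology, let X ⊆ A^ℤ be a bilaterally-finite shift space, and let Ψ : X → U^ℤ be an injective extended sliding block code of finite degree. Then Ψ(X) is a closed subset of U^ℤ (hence a shift space over U) and the inverse map Ψ⁻¹ : Ψ(X) → X is continuous and shift-commuting; that is, Ψ : X → Ψ(X) is reversible. -/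
open Filter Topology Set

open ShiftPaper

namespace ShiftPaper

theorem shiftMap_mem_iff {A : Type*} {X : Set (ℤ → A)} (h : shiftMap '' X = X) (x : ℤ → A) :
    shiftMap x ∈ X ↔ x ∈ X := by
  constructor
  · intro hx
    rw [← h] at hx
    obtain ⟨z, hz, hzx⟩ := hx
    have : z = x := by
      funext n
      have := congrFun hzx (n - 1)
      simpa [shiftMap] using this
    exact this ▸ hz
  · intro hx
    rw [← h]
    exact ⟨x, hx, rfl⟩

theorem shiftIter_mem {A : Type*} {X : Set (ℤ → A)} (h : shiftMap '' X = X) (x : ℤ → A)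
    (hx : x ∈ X) (n : ℤ) : shiftIter n x ∈ X := by
  have key : ∀ n : ℤ, shiftMap (shiftIter n x) = shiftIter (n + 1) x := by
    intro n
    funext m
    simp only [shiftMap, shiftIter]
    congr 1
    ring
  induction n using Int.induction_on with
  | zero =>
    have : shiftIter 0 x = x := by funext m; simp [shiftIter]
    rwa [this]
  | succ i hi =>
    rw [← key]
    exact (shiftMap_mem_iff h _).2 hi
  | pred i hi =>
    rw [← shiftMap_mem_iff h, key]
    simpa using hi

theorem finite_values {A : Type*} {X C : Set (ℤ → A)} (hR : RightFinite X) (hL : LeftFinite X)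
    (hCX : C ⊆ X) (i : ℤ) (hi : ((fun x : ℤ → A => x i) '' C).Finite) (j : ℤ) :
    ((fun x : ℤ → A => x j) '' C).Finite := by
  induction j using Int.inductionOn' (b := i) with
  | zero => exact hi
  | succ k _ ih =>
    refine (ih.biUnion (t := fun a => {b : A | inLang2 X a b}) ?_).subset ?_
    · rintro _ ⟨x, hx, rfl⟩
      exact hR _ ⟨x, hCX hx, k, rfl⟩
    · rintro _ ⟨x, hx, rfl⟩
      simp only [mem_iUnion]
      exact ⟨x k, ⟨x, hx, rfl⟩, x, hCX hx, k, rfl, rfl⟩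
  | pred k _ ih =>
    refine (ih.biUnion (t := fun a => {b : A | inLang2 X b a}) ?_).subset ?_
    · rintro _ ⟨x, hx, rfl⟩
      exact hL _ ⟨x, hCX hx, k, rfl⟩
    · rintro _ ⟨x, hx, rfl⟩
      simp only [mem_iUnion]
      exact ⟨x k, ⟨x, hx, rfl⟩, x, hCX hx, k - 1, rfl, by simp⟩

theorem isClopen_coords {A : Type*} [TopologicalSpace A] [DiscreteTopology A]
    (s : Finset ℤ) (h : ℤ → A) : IsClopen {x : ℤ → A | ∀ i ∈ s, x i = h i} := by
  have : {x : ℤ → A | ∀ i ∈ s, x i = h i} = ⋂ i ∈ s, (fun x : ℤ → A => x i) ⁻¹' {h i} := by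
    ext x
    simp
  rw [this]
  exact isClopen_biInter_finset fun i _ => (isClopen_discrete _).preimage (continuous_apply i)

theorem isCompact_cyl {A : Type*} [TopologicalSpace A] [DiscreteTopology A]
    {X : Set (ℤ → A)} (hX : IsClosed X) (hR : RightFinite X) (hL : LeftFinite X)
    (s : Finset ℤ) (h : ℤ → A) (hs : s.Nonempty) : IsCompact (cylX X s h) := by
  obtain ⟨i, hi⟩ := hs
  have hfin := finite_values (C := cylX X s h) hR hL (fun x hx => hx.1) i
    ((finite_singleton (h i)).subset (by
      rintro _ ⟨x, hx, rfl⟩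
      exact hx.2 i hi))
  refine (isCompact_univ_pi fun j => (hfin j).isCompact).of_isClosed_subset
    (hX.inter (isClopen_coords s h).isClosed) ?_
  intro x hx j _
  exact ⟨x, hx, rfl⟩

end ShiftPaper

/-- an injective finite degree ESBC on a bilaterally-finite shift space has
closed image (hence the image is a shift space), and `Ψ : X → Ψ(X)` is reversible: the
inverse is continuous and shift-commuting. -/
theorem injective_reversible_of_bilaterally_finite
    {A U : Type*} [TopologicalSpace A] [DiscreteTopology A] [Nonempty A]
    [TopologicalSpace U] [DiscreteTopology U] [Nonempty U]
    (X : Set (ℤ → A)) (hX : IsShiftSpace X)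
    (hbf : RightFinite X ∧ LeftFinite X)
    (Ψ : (ℤ → A) → ℤ → U) (hΨ : IsFiniteDegreeESBC X Ψ)
    (hinj : Set.InjOn Ψ X) :
    IsClosed (Ψ '' X) ∧ IsShiftSpace (Ψ '' X) ∧
    ∃ Φ : (ℤ → U) → ℤ → A,
      (∀ x ∈ X, Φ (Ψ x) = x) ∧
      (∀ y ∈ Ψ '' X, Φ y ∈ X ∧ Ψ (Φ y) = y) ∧
      ContinuousOn Φ (Ψ '' X) ∧
      (∀ y ∈ Ψ '' X, Φ (shiftMap y) = shiftMap (Φ y)) := by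
  obtain ⟨hne, hcl, hsh⟩ := hX
  obtain ⟨hR, hL⟩ := hbf
  obtain ⟨B, φ, ⟨hB1, hB2⟩, hind, hfin⟩ := hΨ
  have hmem := fun x hx n => shiftIter_mem hsh x hx n
  -- every member of the barrier is compact
  have hcomp : ∀ C ∈ B, IsCompact C := by
    intro C hC
    obtain ⟨_, s, h, rfl⟩ := hB1 C hC
    rcases s.eq_empty_or_nonempty with rfl | hs
    · have hXe : cylX X ∅ h = X := by simp [cylX]
      rw [hXe] at hC ⊢
      refine Set.Finite.isCompact (Set.Subsingleton.finite ?_)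
      intro x hx z hz
      refine hinj hx hz ?_
      funext n
      rw [hind x hx n X hC (hmem x hx n), hind z hz n X hC (hmem z hz n)]
    · exact isCompact_cyl hcl hR hL s h hs
  have hsub : ∀ C ∈ B, C ⊆ X := by
    intro C hC
    obtain ⟨_, s, h, rfl⟩ := hB1 C hC
    exact fun x hx => hx.1
  have h0 : ∀ x : ℤ → A, shiftIter 0 x = x := fun x => by funext m; simp [shiftIter]
  -- fibres of `Ψ₀` are compact
  have hK : ∀ u : U, IsCompact (X ∩ {x | Ψ x 0 = u}) := by
    intro u
    have : X ∩ {x | Ψ x 0 = u} = ⋃ C ∈ {C | C ∈ B ∧ φ C = u}, C := by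
      ext x
      simp only [mem_iUnion, mem_inter_iff, mem_ofPred_eq]
      constructor
      · rintro ⟨hx, hu⟩
        obtain ⟨C, ⟨hC, hxC⟩, -⟩ := hB2 x hx
        refine ⟨C, ⟨hC, ?_⟩, hxC⟩
        rw [← hu, hind x hx 0 C hC (by rwa [h0])]
      · rintro ⟨C, ⟨hC, hu⟩, hxC⟩
        have hx := hsub C hC hxC
        exact ⟨hx, by rw [hind x hx 0 C hC (by rwa [h0]), hu]⟩
    rw [this]
    exact (hfin u).isCompact_biUnion fun C hC => hcomp C hC.1
  let f : X → ℤ → U := fun x => Ψ x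
  have hfc : Continuous f := by
    refine continuous_pi fun n => continuous_iff_continuousAt.2 fun x => ?_
    obtain ⟨C, ⟨hC, hxC⟩, -⟩ := hB2 _ (hmem x x.2 n)
    obtain ⟨_, s, h, hCe⟩ := hB1 C hC
    have hshc : Continuous (fun z : X => shiftIter n (z : ℤ → A)) :=
      continuous_pi fun m => (continuous_apply (m + n)).comp continuous_subtype_val
    have hnh : (fun z : X => shiftIter n (z : ℤ → A)) ⁻¹' {x | ∀ i ∈ s, x i = h i} ∈ 𝓝 x :=
      ((isClopen_coords s h).isOpen.preimage hshc).mem_nhds (by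
        rw [hCe] at hxC
        exact hxC.2)
    refine (continuousAt_const (y := φ C)).congr ?_
    filter_upwards [hnh] with z hz
    refine (hind z z.2 n C hC ?_).symm
    rw [hCe]
    exact ⟨hmem z z.2 n, hz⟩
  have hfi : Function.Injective f := fun x z hxz => Subtype.ext (hinj x.2 z.2 hxz)
  have hprop : IsProperMap f := by
    rw [isProperMap_iff_ultrafilter]
    refine ⟨hfc, fun 𝒰 y hy => ?_⟩
    have hKc : IsCompact ((Subtype.val : X → ℤ → A) ⁻¹' (X ∩ {x | Ψ x 0 = y 0})) :=
      hcl.isClosedEmbedding_subtypeVal.isCompact_preimage (hK _)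
    have hev : {z : ℤ → U | z 0 = y 0} ∈ 𝓝 y :=
      IsOpen.mem_nhds (s := (fun z : ℤ → U => z 0) ⁻¹' {y 0})
        ((isOpen_discrete _).preimage (continuous_apply (0 : ℤ))) rfl
    have hU : (Subtype.val : X → ℤ → A) ⁻¹' (X ∩ {x | Ψ x 0 = y 0}) ∈ (𝒰 : Filter X) := by
      filter_upwards [hy hev] with z hz
      exact ⟨z.2, hz⟩
    obtain ⟨x, -, hx⟩ := hKc.ultrafilter_le_nhds 𝒰 (le_principal_iff.2 hU)
    exact ⟨x, tendsto_nhds_unique ((hfc.tendsto x).mono_left hx) hy, hx⟩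
  have hce : IsClosedEmbedding f :=
    IsClosedEmbedding.of_continuous_injective_isClosedMap hfc hfi hprop.isClosedMap
  have hrange : Ψ '' X = range f := by
    ext y
    simp [f]
  have hclosed : IsClosed (Ψ '' X) := by
    rw [hrange]
    exact hce.isClosed_range
  have hcomm : ∀ x ∈ X, Ψ (shiftMap x) = shiftMap (Ψ x) := by
    intro x hx
    funext n
    obtain ⟨C, ⟨hC, hxC⟩, -⟩ := hB2 _ (hmem x hx (n + 1))
    have e : shiftIter n (shiftMap x) = shiftIter (n + 1) x := by
      funext m
      simp [shiftIter, shiftMap, add_assoc]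
    rw [hind _ ((shiftMap_mem_iff hsh x).2 hx) n C hC (by rwa [e])]
    exact (hind x hx (n + 1) C hC hxC).symm
  have hl : ∀ x ∈ X, Function.invFunOn Ψ X (Ψ x) = x := fun x hx =>
    hinj.leftInvOn_invFunOn hx
  refine ⟨hclosed, ⟨hne.image _, hclosed, ?_⟩, Function.invFunOn Ψ X, hl, ?_, ?_, ?_⟩
  · ext y
    constructor
    · rintro ⟨_, ⟨x, hx, rfl⟩, rfl⟩
      exact ⟨shiftMap x, (shiftMap_mem_iff hsh x).2 hx, hcomm x hx⟩
    · rintro ⟨x, hx, rfl⟩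
      rw [← hsh] at hx
      obtain ⟨z, hz, rfl⟩ := hx
      exact ⟨Ψ z, ⟨z, hz, rfl⟩, (hcomm z hz).symm⟩
  · rintro _ ⟨x, hx, rfl⟩
    rw [hl x hx]
    exact ⟨hx, rfl⟩
  · rw [continuousOn_iff_continuous_domRestrict]
    have hm : ∀ y : (Ψ '' X : Set (ℤ → U)), Function.invFunOn Ψ X y ∈ X := by
      rintro ⟨_, x, hx, rfl⟩
      simpa only [hl x hx] using hx
    have hg : Continuous (fun y : (Ψ '' X : Set (ℤ → U)) =>
        (⟨Function.invFunOn Ψ X y, hm y⟩ : X)) := by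
      rw [hce.isInducing.continuous_iff]
      convert continuous_subtype_val using 1
      funext y
      obtain ⟨_, x, hx, rfl⟩ := y
      simp only [Function.comp, f, hl x hx]
    exact continuous_subtype_val.comp hg
  · rintro _ ⟨x, hx, rfl⟩
    rw [← hcomm x hx, hl x hx, hl _ ((shiftMap_mem_iff hsh x).2 hx)]
end
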